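/- With the bosonic Fock space V and normal-ordered modes as defined (n = 2, so S = {c, eps_1, eps_2, eps_3, eps_4, epsb_1, epsb_2, epsb_3, epsb_4}), let ω = e^{2πi/3}, β = −√3·c + eps_1, βb = −√3·c + epsb_1, β* = −√3·c* + eps_1*. Define for k, l ∈ ℤ the operators X0(k) := :β* eps_4:(k) − :epsb_4* βb:(k) + ω²·:eps_2* epsb_3:(k) − ω²·:eps_3* epsb_2:(k) + ω·:eps_1* epsb_4:(k) − ω·:eps_4* epsb_1:(k) and Y2(l) := :eps_2* eps_3:(l) − :epsb_3* epsb_2:(l). Then for all k, l ∈ ℤ, [X0(k), Y2(l)] = 0. -/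

import Mathlib

/-!
Every quadratic mode that occurs is `:u v:(M)` with `u`, `v` mutually commuting fields, so that
normal ordering is immaterial and `:u v:(M) = ∑ u(j) v(M-j)` (`NO_apply_of_cp_zero`). From
`[u(j), v(j')] = ⟨u, v⟩ δ` (`op_comm`) one gets
`[:u v:(M), w(j)] = ⟨v, w⟩ u(M+j) + ⟨u, w⟩ v(M+j)` (`NO_comm_op`), hence a formula for
`[:u v:(k), :a b:(l)]` (`NO_comm_NO`) which has no central term in the cases needed.

All pairs of summands of `X0` and `Y2` commute except two:
`[:eps_2* epsb_3:(k), :epsb_3* epsb_2:(l)] = - :eps_2* epsb_2:(k+l)` and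
`[:eps_3* epsb_2:(k), :eps_2* eps_3:(l)] = :eps_2* epsb_2:(k+l)`,
whose contributions to `[X0(k), Y2(l)]` cancel.
-/

noncomputable section

open MvPolynomial

/-- The index set `S` of bosonic symbols: `c`, `eps_1, …, eps_{n+2}`, `epsb_1, …, epsb_{n+2}`.
We index `eps_i` (resp. `epsb_i`) for `1 ≤ i ≤ n+2` by `Fin (n+2)` via `i-1`. -/
abbrev BSym (n : ℕ) := Unit ⊕ (Fin (n+2) ⊕ Fin (n+2))

/-- `W n` is the ℂ-span of `S ∪ S*`; `Sum.inl` indexes `S`, `Sum.inr` indexes `S*`. -/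
abbrev W (n : ℕ) := (BSym n ⊕ BSym n) → ℂ

/-- the symbol `c` -/
def cSym (n : ℕ) : BSym n := Sum.inl ()
/-- the symbol `eps_i`, `1 ≤ i ≤ n+2` (indexed by `i-1 : Fin (n+2)`) -/
def epsSym (n : ℕ) (i : Fin (n+2)) : BSym n := Sum.inr (Sum.inl i)
/-- the symbol `epsb_i`, `1 ≤ i ≤ n+2` (indexed by `i-1 : Fin (n+2)`) -/
def epsbSym (n : ℕ) (i : Fin (n+2)) : BSym n := Sum.inr (Sum.inr i)

/-- a plain (unstarred) symbol, as an element of the span `W n` of `S ∪ S*` -/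
def pl {n : ℕ} (s : BSym n) : W n := Pi.single (Sum.inl s) 1
/-- a starred symbol, as an element of the span `W n` of `S ∪ S*` -/
def st {n : ℕ} (s : BSym n) : W n := Pi.single (Sum.inr s) 1

/-- embed the span of `S` into `W n` (the identity of the span of `S`) -/
def plV {n : ℕ} (u : BSym n → ℂ) : W n := Sum.elim u 0
/-- the ℂ-linear star map from the span of `S` to `W n` -/
def stV {n : ℕ} (u : BSym n → ℂ) : W n := Sum.elim 0 u

/-- The symmetric bilinear form `(·|·)` on the span of `S`:
`(eps_a|eps_b) = (epsb_a|epsb_b) = δ_{ab}` and all other pairs (including `c`) pair to `0`. -/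
def symForm {n : ℕ} (u v : BSym n → ℂ) : ℂ :=
  ∑ i : Fin (n+2), (u (epsSym n i) * v (epsSym n i) + u (epsbSym n i) * v (epsbSym n i))

/-- weight used to define the antisymmetric pairing -/
def wt {n : ℕ} : BSym n → ℂ := Sum.elim (fun _ => 0) (fun _ => 1)

/-- The antisymmetric pairing `⟨·,·⟩` on `W n`:
`⟨u, v*⟩ = −(u|v) = −⟨v*, u⟩`, `⟨u, v⟩ = ⟨u*, v*⟩ = 0` for `u, v` in the span of `S`. -/
def pair {n : ℕ} (U V : W n) : ℂ :=
  ∑ s : BSym n, wt s * (U (Sum.inr s) * V (Sum.inl s) - U (Sum.inl s) * V (Sum.inr s))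

/-- The bosonic Fock space: a polynomial algebra in variables `x_{u,j}`,
`u ∈ S ∪ S*`, `j ∈ ℤ+1/2`, `j > 0`; the positive half-integer `j = k + 1/2` is
represented by `k : ℕ`. -/
abbrev Fock (n : ℕ) := MvPolynomial ((BSym n ⊕ BSym n) × ℕ) ℂ

/-- The operator `u(j)` for a basis symbol `u ∈ S ∪ S*` and half-integer `j = m + 1/2`
(`m : ℤ`): for `j < 0`, multiplication by `x_{u,-j}`; for `j > 0`,
`u(j) = -∂/∂x_{u*,j}` (`u ∈ S`) and `u*(j) = ∂/∂x_{u,j}` (`u ∈ S`). -/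
def opOf {n : ℕ} (b : BSym n ⊕ BSym n) (m : ℤ) : Module.End ℂ (Fock n) :=
  if m < 0 then LinearMap.mulLeft ℂ (X (b, (-m-1).toNat))
  else match b with
    | Sum.inl s => - (pderiv ((Sum.inr s : BSym n ⊕ BSym n), m.toNat)).toLinearMap
    | Sum.inr s => (pderiv ((Sum.inl s : BSym n ⊕ BSym n), m.toNat)).toLinearMap

/-- The operator `u(j)`, `j = m + 1/2`, for `u` in the span `W n` of `S ∪ S*`,
extended ℂ-linearly in `u`. -/
def op {n : ℕ} (u : W n) (m : ℤ) : Module.End ℂ (Fock n) :=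
  ∑ b : BSym n ⊕ BSym n, u b • opOf b m

/-- The summand `:u(j) v(M−j):` of the normal-ordered mode, `j = m + 1/2`:
`u(j)v(M−j)` if `j < 0` and `v(M−j)u(j)` if `j > 0` (note `M - j = (M-m-1) + 1/2`). -/
def nterm {n : ℕ} (u v : W n) (M m : ℤ) : Module.End ℂ (Fock n) :=
  if m < 0 then op u m * op v (M - m - 1) else op v (M - m - 1) * op u m

/-- The normal-ordered mode `:u v:(M) = Σ_{j ∈ ℤ+1/2} :u(j) v(M−j):`.  On each
polynomial only finitely many summands act nonzero; the resulting linear operator is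
defined here by its (finite, via `finsum`) values on the monomial basis. -/
def NO {n : ℕ} (u v : W n) (M : ℤ) : Module.End ℂ (Fock n) :=
  (basisMonomials ((BSym n ⊕ BSym n) × ℕ) ℂ).constr ℂ
    (fun d => ∑ᶠ m : ℤ, nterm u v M m ((monomial d) (1 : ℂ)))

/-- the symbol `eps_i` for `1 ≤ i ≤ n+2`, taking a natural-number index
(out-of-range indices are reduced mod `n+2`; all uses below are in range) -/
def epsN (n i : ℕ) : BSym n := epsSym n ⟨(i-1) % (n+2), Nat.mod_lt _ (by omega)⟩

/-- the symbol `epsb_i` for `1 ≤ i ≤ n+2`, taking a natural-number index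
(out-of-range indices are reduced mod `n+2`; all uses below are in range) -/
def epsbN (n i : ℕ) : BSym n := epsbSym n ⟨(i-1) % (n+2), Nat.mod_lt _ (by omega)⟩

/-- `ω = e^{2πi/3}` -/
def omg : ℂ := Complex.exp (2 * Real.pi * Complex.I / 3)

/-- `β = −√3·c + eps_1` as a plain vector in the span of `S` (inside `W 2`) -/
def betaPl : W 2 := (-(Real.sqrt 3 : ℂ)) • pl (cSym 2) + pl (epsN 2 1)
/-- `βb = −√3·c + epsb_1` as a plain vector in the span of `S` (inside `W 2`) -/
def betabPl : W 2 := (-(Real.sqrt 3 : ℂ)) • pl (cSym 2) + pl (epsbN 2 1)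
/-- `β* = −√3·c* + eps_1*` -/
def betaSt : W 2 := (-(Real.sqrt 3 : ℂ)) • st (cSym 2) + st (epsN 2 1)

/-- `X0(k) := :β* eps_4:(k) − :epsb_4* βb:(k) + ω²:eps_2* epsb_3:(k) − ω²:eps_3* epsb_2:(k)
+ ω:eps_1* epsb_4:(k) − ω:eps_4* epsb_1:(k)` -/
def X0mode (k : ℤ) : Module.End ℂ (Fock 2) :=
  NO betaSt (pl (epsN 2 4)) k - NO (st (epsbN 2 4)) betabPl k
    + omg ^ 2 • NO (st (epsN 2 2)) (pl (epsbN 2 3)) k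
    - omg ^ 2 • NO (st (epsN 2 3)) (pl (epsbN 2 2)) k
    + omg • NO (st (epsN 2 1)) (pl (epsbN 2 4)) k
    - omg • NO (st (epsN 2 4)) (pl (epsbN 2 1)) k

/-- `Y2(l) := :eps_2* eps_3:(l) − :epsb_3* epsb_2:(l)` -/
def Y2mode (l : ℤ) : Module.End ℂ (Fock 2) :=
  NO (st (epsN 2 2)) (pl (epsN 2 3)) l - NO (st (epsbN 2 3)) (pl (epsbN 2 2)) l

/-- The pairing realised by the commutators of the operators `op`. Unlike `pair` it is
nondegenerate on `c`, `c*`, because `opOf` lets `c*` act by `∂/∂x_c`. -/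
def cp {n : ℕ} (U V : W n) : ℂ :=
  ∑ s : BSym n, (U (Sum.inr s) * V (Sum.inl s) - U (Sum.inl s) * V (Sum.inr s))

/-- The value of `cp` on basis symbols. -/
def cpB {n : ℕ} : BSym n ⊕ BSym n → BSym n ⊕ BSym n → ℂ
  | Sum.inl _, Sum.inl _ => 0
  | Sum.inr _, Sum.inr _ => 0
  | Sum.inl s, Sum.inr t => if s = t then -1 else 0
  | Sum.inr s, Sum.inl t => if s = t then 1 else 0

lemma cp_eq_sum {n : ℕ} (U V : W n) : cp U V = ∑ a, ∑ b, U a * V b * cpB a b := by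
  simp [cp, cpB, Fintype.sum_sum_type, Finset.sum_sub_distrib]
  ring

lemma cp_anti {n : ℕ} (U V : W n) : cp U V = - cp V U := by
  simp only [cp, ← Finset.sum_neg_distrib]
  exact Finset.sum_congr rfl fun s _ => by ring

lemma pderiv_comm {σ : Type*} (x y : σ) (p : MvPolynomial σ ℂ) :
    pderiv x (pderiv y p) = pderiv y (pderiv x p) := by
  classical
  have h : ⁅(pderiv x : Derivation ℂ (MvPolynomial σ ℂ) (MvPolynomial σ ℂ)),
      (pderiv y : Derivation ℂ (MvPolynomial σ ℂ) (MvPolynomial σ ℂ))⁆ = 0 := by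
    apply MvPolynomial.derivation_ext
    intro z
    simp [Derivation.commutator_apply, pderiv_X, Pi.single_apply, apply_ite]
  have := DFunLike.congr_fun h p
  rwa [Derivation.commutator_apply, Derivation.zero_apply, sub_eq_zero] at this

lemma cpB_anti {n : ℕ} (a b : BSym n ⊕ BSym n) : cpB a b = - cpB b a := by
  rcases a with a | a <;> rcases b with b | b <;> simp [cpB, eq_comm (a := a), apply_ite]

lemma opOf_comm_aux {n : ℕ} (a b : BSym n ⊕ BSym n) {i j : ℤ} (hi : i < 0) (hj : ¬ j < 0)
    (p : Fock n) :
    opOf a i (opOf b j p) = opOf b j (opOf a i p)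
      + (if i + j + 1 = 0 then cpB a b else 0) • p := by
  by_cases h : i + j + 1 = 0
  · have e : (-i).toNat - 1 = j.toNat := by omega
    rcases a with a | a <;> rcases b with b | b
    · simp [opOf, hi, hj, cpB, pderiv_X]
    · by_cases hab : a = b <;>
        simp [opOf, hi, hj, h, cpB, pderiv_X, e, hab]
    · by_cases hab : a = b <;>
        simp [opOf, hi, hj, h, cpB, pderiv_X, e, hab]
    · simp [opOf, hi, hj, cpB, pderiv_X]
  · have e : (-i).toNat - 1 ≠ j.toNat := by omega
    rcases a with a | a <;> rcases b with b | b <;>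
      simp [opOf, hi, hj, h, pderiv_X, e]

lemma opOf_comm {n : ℕ} (a b : BSym n ⊕ BSym n) (i j : ℤ) (p : Fock n) :
    opOf a i (opOf b j p) = opOf b j (opOf a i p)
      + (if i + j + 1 = 0 then cpB a b else 0) • p := by
  by_cases hi : i < 0 <;> by_cases hj : j < 0
  · have : ¬ (i + j + 1 = 0) := by omega
    simp [opOf, hi, hj, this, mul_left_comm]
  · exact opOf_comm_aux a b hi hj p
  · rw [opOf_comm_aux b a hj hi p, cpB_anti b a, add_comm j i, add_assoc, ← add_smul]
    split_ifs <;> simp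
  · have : ¬ (i + j + 1 = 0) := by omega
    rcases a with a | a <;> rcases b with b | b <;>
      simp [opOf, hi, hj, this, pderiv_comm (_, i.toNat)]

lemma op_apply {n : ℕ} (u : W n) (m : ℤ) (p : Fock n) :
    op u m p = ∑ b, u b • opOf b m p := by
  simp [op, LinearMap.sum_apply]

lemma op_comm {n : ℕ} (u v : W n) (i j : ℤ) (p : Fock n) :
    op u i (op v j p) = op v j (op u i p) + (if i + j + 1 = 0 then cp u v else 0) • p := by
  have h1 : op u i (op v j p) = ∑ a, ∑ b, (u a * v b) • opOf a i (opOf b j p) := by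
    simp only [op_apply, map_sum, map_smul, Finset.smul_sum, smul_smul]
    rw [Finset.sum_comm]
    simp only [mul_comm]
  have h2 : op v j (op u i p) = ∑ a, ∑ b, (u a * v b) • opOf b j (opOf a i p) := by
    simp only [op_apply, map_sum, map_smul, Finset.smul_sum, smul_smul]
  rw [h1, h2, cp_eq_sum]
  simp only [opOf_comm _ _ i j p, smul_add, Finset.sum_add_distrib, smul_smul]
  congr 1
  split_ifs
  · simp only [Finset.sum_smul]
  · simp

/-- A polynomial involves finitely many variables, so high positive modes annihilate it. -/
lemma op_locally_nilp {n : ℕ} (u : W n) (p : Fock n) :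
    ∃ N : ℤ, 0 ≤ N ∧ ∀ m, N ≤ m → op u m p = 0 := by
  obtain ⟨N, hN⟩ : ∃ N : ℕ, ∀ x ∈ p.vars, x.2 < N :=
    ⟨p.vars.sup (fun x => x.2) + 1, fun x hx =>
      Nat.lt_succ_of_le (Finset.le_sup (f := fun x : (BSym n ⊕ BSym n) × ℕ => x.2) hx)⟩
  refine ⟨N, by positivity, fun m hm => ?_⟩
  rw [op_apply]
  apply Finset.sum_eq_zero
  intro b _
  have hm' : ¬ m < 0 := by omega
  have key : ∀ s : BSym n ⊕ BSym n, pderiv (s, m.toNat) p = 0 := fun s =>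
    pderiv_eq_zero_of_notMem_vars fun h => by
      have := hN _ h
      simp only at this
      omega
  rcases b with b | b <;> simp [opOf, hm', key]

lemma nterm_finite {n : ℕ} (u v : W n) (M : ℤ) (p : Fock n) :
    (Function.support fun m => nterm u v M m p).Finite := by
  obtain ⟨A, hA0, hA⟩ := op_locally_nilp u p
  obtain ⟨B, hB0, hB⟩ := op_locally_nilp v p
  refine (Set.finite_Icc (min (M - B) 0) A).subset fun m hm => ?_
  by_contra hc
  apply hm
  simp only [Set.mem_Icc, not_and_or, not_le] at hc
  rcases hc with hc | hc
  · have h0 : m < 0 := by omega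
    simp [nterm, h0, hB (M - m - 1) (by omega)]
  · have h0 : ¬ m < 0 := by omega
    simp [nterm, h0, hA m (by omega)]

/-- The defining formula of `NO` on monomials holds on all polynomials. -/
lemma NO_apply {n : ℕ} (u v : W n) (M : ℤ) (p : Fock n) :
    NO u v M p = ∑ᶠ m : ℤ, nterm u v M m p := by
  let F : Module.End ℂ (Fock n) :=
    { toFun := fun p => ∑ᶠ m : ℤ, nterm u v M m p
      map_add' := fun p q => by
        simp only [map_add]
        exact finsum_add_distrib (nterm_finite u v M p) (nterm_finite u v M q)
      map_smul' := fun c p => by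
        simp only [map_smul, RingHom.id_apply]
        exact (smul_finsum c _).symm }
  have : NO u v M = F := by
    apply (basisMonomials ((BSym n ⊕ BSym n) × ℕ) ℂ).ext
    intro d
    rw [NO, Module.Basis.constr_basis]
    simp [F]
  rw [this]
  rfl

lemma nterm_of_cp_zero {n : ℕ} {u v : W n} (h : cp u v = 0) (M m : ℤ) (p : Fock n) :
    nterm u v M m p = op u m (op v (M - m - 1) p) := by
  have := op_comm u v m (M - m - 1) p
  simp only [h, ite_self, zero_smul, add_zero] at this
  unfold nterm
  split_ifs
  · rfl
  · rw [this]; rfl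

lemma NO_apply_of_cp_zero {n : ℕ} {u v : W n} (h : cp u v = 0) (M : ℤ) (p : Fock n) :
    NO u v M p = ∑ᶠ m : ℤ, op u m (op v (M - m - 1) p) := by
  simp only [NO_apply, nterm_of_cp_zero h]

lemma op_op_finite {n : ℕ} {u v : W n} (h : cp u v = 0) (M : ℤ) (p : Fock n) :
    (Function.support fun m => op u m (op v (M - m - 1) p)).Finite := by
  simpa only [nterm_of_cp_zero h] using nterm_finite u v M p

lemma NO_comm_op {n : ℕ} {u v : W n} (h : cp u v = 0) (w : W n) (k m : ℤ) (p : Fock n) :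
    NO u v k (op w m p) = op w m (NO u v k p)
      + (cp v w • op u (k + m) p + cp u w • op v (k + m) p) := by
  have hfin := op_op_finite h k p
  have hfin' : (Function.support fun i => op w m (op u i (op v (k - i - 1) p))).Finite :=
    hfin.subset fun i hi hc => hi (by simp only [hc, map_zero])
  -- The delta functions in the two commutators each pick out a single summand.
  have key : ∀ i, op u i (op v (k - i - 1) (op w m p)) =
      op w m (op u i (op v (k - i - 1) p))
      + ((if i = k + m then cp v w • op u (k + m) p else 0)
        + (if i = -m - 1 then cp u w • op v (k + m) p else 0)) := by
    intro i
    rw [op_comm v w, map_add, op_comm u w, map_smul, add_assoc, add_comm (_ • op v _ p)]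
    congr 2
    · by_cases hi : i = k + m
      · subst hi
        rw [if_pos (by omega), if_pos rfl]
      · rw [if_neg (by omega), if_neg hi, zero_smul]
    · by_cases hi : i = -m - 1
      · subst hi
        rw [if_pos (by omega), if_pos rfl]
        congr 3
        omega
      · rw [if_neg (by omega), if_neg hi, zero_smul]
  have hs : ∀ (c : ℤ) (q : Fock n),
      (Function.support fun i => if i = c then q else 0).Finite := fun c q =>
    (Set.finite_singleton c).subset fun i hi => by
      by_contra hc
      exact hi (if_neg hc)
  have hsum : ∀ (c : ℤ) (q : Fock n), ∑ᶠ i, (if i = c then q else 0) = q := fun c q => by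
    rw [finsum_eq_single _ c fun i hi => if_neg hi, if_pos rfl]
  rw [NO_apply_of_cp_zero h, NO_apply_of_cp_zero h, finsum_congr key,
    finsum_add_distrib hfin' (((hs _ _).union (hs _ _)).subset (Function.support_add _ _)),
    finsum_add_distrib (hs _ _) (hs _ _), hsum, hsum]
  congr 1
  exact ((op w m).toAddMonoidHom.map_finsum hfin).symm

lemma NO_comm_NO {n : ℕ} {u v a b : W n} (h : cp u v = 0) (h' : cp a b = 0) (k l : ℤ)
    (p : Fock n) :
    NO u v k (NO a b l p) - NO a b l (NO u v k p) =
      ∑ᶠ m : ℤ, ((cp v a • op u (k + m) (op b (l - m - 1) p)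
          + cp u a • op v (k + m) (op b (l - m - 1) p))
        + (cp v b • op a m (op u (k + (l - m - 1)) p)
          + cp u b • op a m (op v (k + (l - m - 1)) p))) := by
  have f1 := op_op_finite h' l p
  have f2 := op_op_finite h' l (NO u v k p)
  have f3 : (Function.support fun m => NO u v k (op a m (op b (l - m - 1) p))).Finite :=
    f1.subset fun i hi hc => hi (by simp only [hc, map_zero])
  have e : NO u v k (∑ᶠ m, op a m (op b (l - m - 1) p)) =
      ∑ᶠ m, NO u v k (op a m (op b (l - m - 1) p)) :=
    (NO u v k).toAddMonoidHom.map_finsum f1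
  rw [NO_apply_of_cp_zero h' l p, NO_apply_of_cp_zero h' l (NO u v k p), e,
    ← finsum_sub_distrib f3 f2]
  refine finsum_congr fun m => ?_
  rw [NO_comm_op h, NO_comm_op h]
  simp only [map_add, map_smul]
  abel

lemma NO_lie_zero {n : ℕ} {u v a b : W n} (h : cp u v = 0) (h' : cp a b = 0)
    (h1 : cp v a = 0) (h2 : cp u a = 0) (h3 : cp v b = 0) (h4 : cp u b = 0) (k l : ℤ) :
    ⁅NO u v k, NO a b l⁆ = 0 := by
  refine LinearMap.ext fun p => ?_
  rw [Ring.lie_def]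
  refine (NO_comm_NO h h' k l p).trans ?_
  simp only [h1, h2, h3, h4, zero_smul, add_zero, finsum_zero, LinearMap.zero_apply]

lemma NO_lie_inner {n : ℕ} {u v a b : W n} (h : cp u v = 0) (h' : cp a b = 0)
    (h2 : cp u a = 0) (h3 : cp v b = 0) (h4 : cp u b = 0) (k l : ℤ) :
    ⁅NO u v k, NO a b l⁆ = cp v a • NO u b (k + l) := by
  refine LinearMap.ext fun p => ?_
  rw [Ring.lie_def]
  refine (NO_comm_NO h h' k l p).trans ?_
  simp only [h2, h3, h4, zero_smul, add_zero, LinearMap.smul_apply]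
  rw [NO_apply_of_cp_zero h4, smul_finsum, ← finsum_comp_equiv (Equiv.addLeft (-k))]
  refine finsum_congr fun m => ?_
  simp only [Equiv.coe_addLeft]
  rw [show k + (-k + m) = m by ring, show l - (-k + m) - 1 = k + l - m - 1 by ring]

lemma NO_lie_outer {n : ℕ} {u v a b : W n} (h : cp u v = 0) (h' : cp a b = 0)
    (h1 : cp v a = 0) (h2 : cp u a = 0) (h3 : cp v b = 0) (k l : ℤ) :
    ⁅NO u v k, NO a b l⁆ = cp u b • NO a v (k + l) := by
  refine LinearMap.ext fun p => ?_
  have hav : cp a v = 0 := by rw [cp_anti, h1, neg_zero]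
  rw [Ring.lie_def]
  refine (NO_comm_NO h h' k l p).trans ?_
  simp only [h1, h2, h3, zero_smul, zero_add, LinearMap.smul_apply]
  rw [NO_apply_of_cp_zero hav, smul_finsum]
  refine finsum_congr fun m => ?_
  rw [show k + (l - m - 1) = k + l - m - 1 by ring]

lemma cp_st_st {n : ℕ} (s t : BSym n) : cp (st s) (st t) = 0 := by
  simp [cp, st]

lemma cp_pl_pl {n : ℕ} (s t : BSym n) : cp (pl s) (pl t) = 0 := by
  simp [cp, pl]

lemma cp_st_pl {n : ℕ} (s t : BSym n) : cp (st s) (pl t) = if s = t then 1 else 0 := by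
  simp [cp, st, pl, Pi.single_apply, eq_comm]

lemma cp_pl_st {n : ℕ} (s t : BSym n) : cp (pl s) (st t) = if s = t then -1 else 0 := by
  rw [cp_anti, cp_st_pl]
  simp only [eq_comm (a := t)]
  split_ifs <;> simp

lemma cp_add_left {n : ℕ} (u v w : W n) : cp (u + v) w = cp u w + cp v w := by
  simp only [cp, ← Finset.sum_add_distrib, Pi.add_apply]
  exact Finset.sum_congr rfl fun s _ => by ring

lemma cp_smul_left {n : ℕ} (c : ℂ) (u w : W n) : cp (c • u) w = c * cp u w := by
  simp only [cp, Finset.mul_sum, Pi.smul_apply, smul_eq_mul]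
  exact Finset.sum_congr rfl fun s _ => by ring

lemma cp_add_right {n : ℕ} (u v w : W n) : cp w (u + v) = cp w u + cp w v := by
  rw [cp_anti, cp_add_left, cp_anti u, cp_anti v]
  ring

lemma cp_smul_right {n : ℕ} (c : ℂ) (u w : W n) : cp w (c • u) = c * cp w u := by
  rw [cp_anti, cp_smul_left, cp_anti u]
  ring

/-- `[X0(k), Y2(l)] = 0` (type `D₄`). -/
theorem bosonic_X0_Y2_bracket (k l : ℤ) :
    X0mode k * Y2mode l - Y2mode l * X0mode k = 0 := by
  let _ := LieRing.ofAssociativeRing (A := Module.End ℂ (Fock 2))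
  rw [← LieRing.of_associative_ring_bracket, X0mode, Y2mode]
  simp only [lie_sub, sub_lie, add_lie, smul_lie]
  rw [NO_lie_inner (u := st (epsN 2 2)) (v := pl (epsbN 2 3)) (a := st (epsbN 2 3))
      (b := pl (epsbN 2 2)),
    NO_lie_outer (u := st (epsN 2 3)) (v := pl (epsbN 2 2)) (a := st (epsN 2 2))
      (b := pl (epsN 2 3))]
  · repeat rw [NO_lie_zero]
    all_goals
      simp only [cp_st_st, cp_pl_pl, cp_st_pl, cp_pl_st, betaSt, betabPl, cp_add_left,
        cp_smul_left, cp_add_right, cp_smul_right]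
    all_goals simp [epsN, epsbN, epsSym, epsbSym, cSym]
  all_goals
    simp [cp_st_st, cp_pl_pl, cp_st_pl, cp_pl_st, epsN, epsbN, epsSym, epsbSym]
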